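/- If t is a region quadtree well-formed for a half-open square R of side w > 0 and p ∈ R, then insert(p, t, R) is well-formed for R and keys(insert(p, t, R)) = keys(t) ∪ {p}. In particular, insertion preserves the quadtree properties: every leaf key remains inside the region of the node that stores it. -/

import Mathlib

/-- The four quadrant directions. -/
inductive Dir : Type
  | nw | ne | sw | se
  deriving DecidableEq

noncomputable section

/-- A half-open square `[x, x+w) × [y, y+w)` given by its corner `(x, y)` and side `w`. -/
structure Sq where
  x : ℝ
  y : ℝ
  w : ℝ

/-- The set of points of a half-open square. -/
def Sq.set (R : Sq) : Set (ℝ × ℝ) :=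
  {p : ℝ × ℝ | R.x ≤ p.1 ∧ p.1 < R.x + R.w ∧ R.y ≤ p.2 ∧ p.2 < R.y + R.w}

/-- The quadrant of a square in a given direction: a half-open square of side `w/2`. -/
def Sq.quad (R : Sq) : Dir → Sq
  | .nw => ⟨R.x, R.y, R.w / 2⟩
  | .ne => ⟨R.x + R.w / 2, R.y, R.w / 2⟩
  | .sw => ⟨R.x, R.y + R.w / 2, R.w / 2⟩
  | .se => ⟨R.x + R.w / 2, R.y + R.w / 2, R.w / 2⟩

/-- The direction (routing quadrant) of a point `p` in the square `R`. -/
def Sq.dirOf (R : Sq) (p : ℝ × ℝ) : Dir :=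
  if p.1 < R.x + R.w / 2 then
    if p.2 < R.y + R.w / 2 then .nw else .sw
  else
    if p.2 < R.y + R.w / 2 then .ne else .se

/-- The square reached after `d` routing steps for the point `p`, starting from the root
square `R` (so `routeSq R p 0 = R`). -/
def routeSq (R : Sq) (p : ℝ × ℝ) : ℕ → Sq
  | 0 => R
  | n + 1 => (routeSq R p n).quad ((routeSq R p n).dirOf p)

/-- The `n`-th element of the routing sequence of `p`, i.e. the direction taken at step `n`. -/
def routeDir (R : Sq) (p : ℝ × ℝ) (n : ℕ) : Dir :=
  (routeSq R p n).dirOf p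

/-- A region quadtree: `empty`, a `leaf` storing a key, or an `internal` node with four
children (nw, ne, sw, se). -/
inductive QTree : Type
  | empty : QTree
  | leaf (p : ℝ × ℝ) : QTree
  | internal (nw ne sw se : QTree) : QTree
  deriving DecidableEq

/-- The child of a tree in a given direction (for internal nodes). -/
def QTree.child : QTree → Dir → QTree
  | .internal a _ _ _, .nw => a
  | .internal _ b _ _, .ne => b
  | .internal _ _ c _, .sw => c
  | .internal _ _ _ e, .se => e
  | _, _ => .empty

/-- The set of keys appearing in the leaf nodes of a quadtree. -/
def QTree.keys : QTree → Set (ℝ × ℝ)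
  | .empty => ∅
  | .leaf p => {p}
  | .internal a b c e => a.keys ∪ b.keys ∪ c.keys ∪ e.keys

/-- `WF t R`: the tree `t` is well-formed for the half-open square `R`: an `empty` tree is
well-formed; a leaf is well-formed if its key lies in `R`; an internal node is well-formed if
each child is well-formed for the corresponding quadrant of `R`. -/
inductive WF : QTree → Sq → Prop
  | empty (R : Sq) : WF .empty R
  | leaf (p : ℝ × ℝ) (R : Sq) (hp : p ∈ R.set) : WF (.leaf p) R
  | internal (a b c e : QTree) (R : Sq)
      (ha : WF a (R.quad .nw)) (hb : WF b (R.quad .ne))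
      (hc : WF c (R.quad .sw)) (he : WF e (R.quad .se)) :
      WF (.internal a b c e) R

/-- The internal node whose child in direction `d` is `f d`. -/
def mkNode (f : Dir → QTree) : QTree :=
  .internal (f .nw) (f .ne) (f .sw) (f .se)

/-- Fuelled version of `split`: given fuel `n + 1`, if `p` and `q` lie in different quadrants
of `R`, return the internal node with `leaf p` and `leaf q` in their respective quadrants and
`empty` elsewhere; otherwise recurse (with fuel `n`) into the common quadrant containing `p`
and `q`, placing `empty` elsewhere. -/
def splitFuel : ℕ → ℝ × ℝ → ℝ × ℝ → Sq → QTree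
  | 0, _, _, _ => .empty
  | n + 1, p, q, R =>
    if R.dirOf p = R.dirOf q then
      mkNode fun d => if d = R.dirOf p then splitFuel n p q (R.quad (R.dirOf p)) else .empty
    else
      mkNode fun d =>
        if d = R.dirOf p then .leaf p else if d = R.dirOf q then .leaf q else .empty

open Classical in
/-- Enough fuel for the recursion defining `split p q R`: one more than the first depth
(along the routing path of `p`) at which `p` and `q` take different directions. -/
def splitDepth (p q : ℝ × ℝ) (R : Sq) : ℕ :=
  if h : ∃ n : ℕ, (routeSq R p n).dirOf p ≠ (routeSq R p n).dirOf q then Nat.find h + 1 else 0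

/-- `split p q R`, the region quadtree containing exactly the two distinct keys `p, q ∈ R`,
defined by the recursion described above (realized via the fuelled function with enough
fuel for the recursion to have terminated). -/
def split (p q : ℝ × ℝ) (R : Sq) : QTree :=
  splitFuel (splitDepth p q R) p q R

/-- Insertion of a key `p` into a quadtree well-formed for the region `R`. -/
def qinsert (p : ℝ × ℝ) : QTree → Sq → QTree
  | .empty, _ => .leaf p
  | .leaf q, R => if q = p then .leaf p else split p q R
  | .internal a b c e, R =>
    match R.dirOf p with
    | .nw => .internal (qinsert p a (R.quad .nw)) b c e
    | .ne => .internal a (qinsert p b (R.quad .ne)) c e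
    | .sw => .internal a b (qinsert p c (R.quad .sw)) e
    | .se => .internal a b c (qinsert p e (R.quad .se))

/-- The subtree of `t` at a direction sequence (defined only when the path exists). -/
def subtreeAt : QTree → List Dir → Option QTree
  | t, [] => some t
  | .internal a b c e, d :: s =>
    match d with
    | .nw => subtreeAt a s
    | .ne => subtreeAt b s
    | .sw => subtreeAt c s
    | .se => subtreeAt e s
  | .empty, _ :: _ => none
  | .leaf _, _ :: _ => none

theorem mem_quad (R : Sq) (p : ℝ × ℝ) (hp : p ∈ R.set) : p ∈ (R.quad (R.dirOf p)).set := by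
  obtain ⟨h1, h2, h3, h4⟩ := hp
  unfold Sq.dirOf
  split_ifs <;> simp only [Sq.quad, Sq.set, Set.mem_ofPred_eq] <;>
    refine ⟨?_, ?_, ?_, ?_⟩ <;> linarith

theorem quad_w (R : Sq) (d : Dir) : (R.quad d).w = R.w / 2 := by
  cases d <;> rfl

theorem routeSq_succ (R : Sq) (p : ℝ × ℝ) (n : ℕ) :
    routeSq R p (n + 1) = routeSq (R.quad (R.dirOf p)) p n := by
  induction n with
  | zero => rfl
  | succ n ih => rw [routeSq, ih]; rfl

theorem routeSq_w (R : Sq) (p : ℝ × ℝ) (n : ℕ) : (routeSq R p n).w = R.w / 2 ^ n := by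
  induction n with
  | zero => simp [routeSq]
  | succ n ih => rw [routeSq, quad_w, ih, pow_succ, div_div]

theorem wf_mkNode (f : Dir → QTree) (R : Sq) (h : ∀ d, WF (f d) (R.quad d)) :
    WF (mkNode f) R :=
  WF.internal _ _ _ _ _ (h _) (h _) (h _) (h _)

theorem mem_keys_mkNode (f : Dir → QTree) (x : ℝ × ℝ) :
    x ∈ (mkNode f).keys ↔ ∃ d, x ∈ (f d).keys := by
  simp only [mkNode, QTree.keys, Set.mem_union]
  constructor
  · rintro (((h | h) | h) | h)
    exacts [⟨_, h⟩, ⟨_, h⟩, ⟨_, h⟩, ⟨_, h⟩]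
  · rintro ⟨d, h⟩
    cases d <;> tauto

theorem exists_diff (p q : ℝ × ℝ) (R : Sq) (hw : 0 < R.w) (hp : p ∈ R.set) (hq : q ∈ R.set)
    (hne : q ≠ p) : ∃ n : ℕ, (routeSq R p n).dirOf p ≠ (routeSq R p n).dirOf q := by
  by_contra! hall
  have hmem : ∀ n, p ∈ (routeSq R p n).set ∧ q ∈ (routeSq R p n).set := by
    intro n
    induction n with
    | zero => exact ⟨hp, hq⟩
    | succ n ih =>
      refine ⟨mem_quad _ _ ih.1, ?_⟩
      have := mem_quad _ _ ih.2
      rwa [← hall n] at this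
  have key : ∀ a : ℝ, (∀ n : ℕ, a ≤ R.w / 2 ^ n) → a ≤ 0 := by
    intro a ha
    by_contra! hpos
    obtain ⟨n, hn⟩ := pow_unbounded_of_one_lt (R.w / a) (one_lt_two : (1 : ℝ) < 2)
    have h1 := ha n
    rw [div_lt_iff₀ hpos] at hn
    rw [le_div_iff₀ (by positivity)] at h1
    linarith
  have hb : ∀ n : ℕ, p.1 - q.1 ≤ R.w / 2 ^ n ∧ q.1 - p.1 ≤ R.w / 2 ^ n ∧
      p.2 - q.2 ≤ R.w / 2 ^ n ∧ q.2 - p.2 ≤ R.w / 2 ^ n := by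
    intro n
    obtain ⟨⟨a1, a2, a3, a4⟩, b1, b2, b3, b4⟩ := hmem n
    rw [routeSq_w] at a2 a4 b2 b4
    refine ⟨?_, ?_, ?_, ?_⟩ <;> linarith
  have h1 := key _ fun n => (hb n).1
  have h2 := key _ fun n => (hb n).2.1
  have h3 := key _ fun n => (hb n).2.2.1
  have h4 := key _ fun n => (hb n).2.2.2
  exact hne (Prod.ext (by linarith) (by linarith))

theorem splitFuel_spec (p q : ℝ × ℝ) (m : ℕ) : ∀ (R : Sq), p ∈ R.set → q ∈ R.set →
    (routeSq R p m).dirOf p ≠ (routeSq R p m).dirOf q →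
    (∀ k < m, (routeSq R p k).dirOf p = (routeSq R p k).dirOf q) →
    WF (splitFuel (m + 1) p q R) R ∧ (splitFuel (m + 1) p q R).keys = {q} ∪ {p} := by
  induction m with
  | zero =>
    intro R hp hq hne _
    change R.dirOf p ≠ R.dirOf q at hne
    rw [splitFuel, if_neg hne]
    constructor
    · apply wf_mkNode
      intro d
      split_ifs with h1 h2
      · subst h1; exact WF.leaf _ _ (mem_quad _ _ hp)
      · subst h2; exact WF.leaf _ _ (mem_quad _ _ hq)
      · exact WF.empty _
    · ext x
      rw [mem_keys_mkNode]
      constructor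
      · rintro ⟨d, hd⟩
        split_ifs at hd
        · exact Or.inr hd
        · exact Or.inl hd
        · exact hd.elim
      · rintro (h | h)
        · refine ⟨R.dirOf q, ?_⟩
          rw [if_neg (Ne.symm hne), if_pos rfl]; exact h
        · refine ⟨R.dirOf p, ?_⟩
          rw [if_pos rfl]; exact h
  | succ m ih =>
    intro R hp hq hne heq
    have h0 : R.dirOf p = R.dirOf q := heq 0 (Nat.succ_pos m)
    have hq' := mem_quad _ _ hq
    rw [← h0] at hq'
    rw [routeSq_succ] at hne
    obtain ⟨h1, h2⟩ := ih (R.quad (R.dirOf p)) (mem_quad _ _ hp) hq' hne (by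
      intro k hk
      have := heq (k + 1) (by omega)
      rwa [routeSq_succ] at this)
    rw [splitFuel, if_pos h0]
    constructor
    · apply wf_mkNode
      intro d
      split_ifs with h
      · subst h; exact h1
      · exact WF.empty _
    · ext x
      rw [mem_keys_mkNode, ← h2]
      constructor
      · rintro ⟨d, hd⟩
        split_ifs at hd
        · exact hd
        · exact hd.elim
      · intro h
        refine ⟨R.dirOf p, ?_⟩
        rw [if_pos rfl]; exact h

theorem split_spec (p q : ℝ × ℝ) (R : Sq) (hw : 0 < R.w) (hp : p ∈ R.set) (hq : q ∈ R.set)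
    (hne : q ≠ p) : WF (split p q R) R ∧ (split p q R).keys = {q} ∪ {p} := by
  classical
  have h := exists_diff p q R hw hp hq hne
  unfold split splitDepth
  rw [dif_pos h]
  refine splitFuel_spec p q _ R hp hq (Nat.find_spec h) ?_
  intro k hk
  exact not_not.mp (Nat.find_min h hk)

/-- If `t` is a region quadtree well-formed for a half-open square `R` of side
`w > 0` and `p ∈ R`, then `insert(p, t, R)` is well-formed for `R` and
`keys(insert(p, t, R)) = keys(t) ∪ {p}`.  In particular, insertion preserves the quadtree
properties: every leaf key remains inside the region of the node that stores it. -/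
theorem insert_wf_and_keys (R : Sq) (hw : 0 < R.w) (t : QTree) (ht : WF t R)
    (p : ℝ × ℝ) (hp : p ∈ R.set) :
    WF (qinsert p t R) R ∧ (qinsert p t R).keys = t.keys ∪ {p} := by
  induction ht with
  | empty R => exact ⟨WF.leaf _ _ hp, by simp [qinsert, QTree.keys]⟩
  | leaf q R hq =>
    rw [qinsert]
    split_ifs with h
    · subst h
      exact ⟨WF.leaf _ _ hp, by simp [QTree.keys]⟩
    · exact split_spec p q R hw hp hq h
  | internal a b c e R ha hb hc he iha ihb ihc ihe =>
    have hm := mem_quad R p hp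
    have hw' : ∀ d, 0 < (R.quad d).w := fun d => by rw [quad_w]; linarith
    rw [qinsert]
    cases hd : R.dirOf p <;> rw [hd] at hm <;> dsimp only
    · obtain ⟨h1, h2⟩ := iha (hw' _) hm
      refine ⟨WF.internal _ _ _ _ _ h1 hb hc he, ?_⟩
      simp only [QTree.keys, h2]; ac_rfl
    · obtain ⟨h1, h2⟩ := ihb (hw' _) hm
      refine ⟨WF.internal _ _ _ _ _ ha h1 hc he, ?_⟩
      simp only [QTree.keys, h2]; ac_rfl
    · obtain ⟨h1, h2⟩ := ihc (hw' _) hm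
      refine ⟨WF.internal _ _ _ _ _ ha hb h1 he, ?_⟩
      simp only [QTree.keys, h2]; ac_rfl
    · obtain ⟨h1, h2⟩ := ihe (hw' _) hm
      refine ⟨WF.internal _ _ _ _ _ ha hb hc h1, ?_⟩
      simp only [QTree.keys, h2]; ac_rfl
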